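/- If α > 1/2, then the minimal nonnegative solution m of x = G(x) satisfies 1ᵀm = (1-α)/α < 1, and there exists a stochastic solution s with s ≥ m componentwise and 1ᵀs = 1. -/

import Mathlib

noncomputable def Gmap (n : ℕ) (α : ℝ) (v : Fin n → ℝ)
    (R : Matrix (Fin n) (Fin n × Fin n) ℝ) (x : Fin n → ℝ) : Fin n → ℝ :=
  α • R.mulVec (fun p => x p.1 * x p.2) + (1 - α) • v

/-! Summing coordinates turns `x = G x` into the quadratic `b = α b² + (1 - α)` for `b = ∑ i, x i`,
with roots `1` and `(1 - α) / α`. For either root `b`, the map `G` preserves the simplex of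
nonnegative vectors with sum `b`, so Brouwer's theorem provides a nonnegative solution with that
sum. Since `m` lies below the solution with the smaller sum, its own sum must be the smaller root;
it also lies below the stochastic solution.

Brouwer's theorem is obtained by Scarf's method. Points of the simplex are compared by their
coordinates, one order per coordinate, and a parity count shows that every coloring of a finite set
of points by the coordinates admits a subset `S` such that no point of the set exceeds the
coordinatewise minimum of `S` in every coordinate occurring as a color in `S`. On a fine net such an
`S` is small, which yields the Knaster–Kuratowski–Mazurkiewicz covering theorem in the limit. -/

open Finset

namespace Scarf

section Dominating

variable {I U α : Type*} [LinearOrder α] {f : I → U → α} {S τ : Finset U}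

/-- For a family of orders on `U`, given by their rank functions `f i`, the set `S` is dominating if
no element of `U` lies strictly above, for every `i`, some element of `S`. -/
def Dominating (f : I → U → α) (S : Finset U) : Prop :=
  ∀ t, ∃ i, ∀ s ∈ S, f i t ≤ f i s

theorem Dominating.mono (hS : Dominating f S) (h : τ ⊆ S) : Dominating f τ := fun t ↦
  (hS t).imp fun _ hi s hs ↦ hi s (h hs)

/-- The elements that can only be dominated by `τ` through the order `k`. -/
def beyond (f : I → U → α) (τ : Finset U) (k : I) : Set U :=
  {u | ∀ i ≠ k, ∃ s ∈ τ, f i s < f i u}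

/-- A pivot of `τ` in direction `k`: adjoining it to a dominating set `τ` of one element less than
there are orders is Scarf's replacement step. -/
def IsPivot (f : I → U → α) (τ : Finset U) (k : I) (x : U) : Prop :=
  x ∈ beyond f τ k ∧ IsMaxOn (f k) (beyond f τ k) x

theorem exists_isPivot [Finite U] {k : I} (h : (beyond f τ k).Nonempty) : ∃ x, IsPivot f τ k x :=
  Set.exists_max_image _ (f k) (Set.toFinite _) h

theorem IsPivot.unique {k : I} (hf : Function.Injective (f k)) {x y : U} (hx : IsPivot f τ k x)
    (hy : IsPivot f τ k y) : x = y :=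
  hf (le_antisymm (hy.2 hx.1) (hx.2 hy.1))

theorem eq_of_mem_beyond {x : U} {i k : I} (hx : x ∈ beyond f τ k)
    (hi : ∀ s ∈ τ, f i x ≤ f i s) : i = k := by
  by_contra hik
  obtain ⟨s, hs, hlt⟩ := hx i hik
  exact (hi s hs).not_gt hlt

theorem Dominating.le_of_mem_beyond (hτ : Dominating f τ) {x : U} {k : I}
    (hx : x ∈ beyond f τ k) : ∀ s ∈ τ, f k x ≤ f k s := by
  obtain ⟨i, hi⟩ := hτ x
  exact eq_of_mem_beyond hx hi ▸ hi

theorem Dominating.disjoint_beyond (hτ : Dominating f τ) {i j : I} (hij : i ≠ j) :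
    Disjoint (beyond f τ i) (beyond f τ j) :=
  Set.disjoint_left.2 fun _ hxi hxj ↦
    hij (eq_of_mem_beyond hxj (hτ.le_of_mem_beyond hxi))

theorem Dominating.insert_isPivot [DecidableEq U] (hτ : Dominating f τ) {k : I} {x : U}
    (hx : IsPivot f τ k x) : Dominating f (insert x τ) := by
  intro t
  by_cases ht : t ∈ beyond f τ k
  · exact ⟨k, forall_mem_insert _ _ _ |>.2 ⟨hx.2 ht, hτ.le_of_mem_beyond ht⟩⟩
  · obtain ⟨i, hik, hi⟩ : ∃ i ≠ k, ∀ s ∈ τ, f i t ≤ f i s := by simpa [beyond] using ht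
    obtain ⟨s, hs, hsx⟩ := hx.1 i hik
    exact ⟨i, forall_mem_insert _ _ _ |>.2 ⟨(hi s hs).trans hsx.le, hi⟩⟩

theorem Dominating.exists_argmin [Fintype I] [DecidableEq U] (hf : ∀ i, Function.Injective (f i))
    (hS : Dominating f S) (hne : S.Nonempty) :
    ∃ σ : I → U, (∀ i, ∀ s ∈ S, f i (σ i) ≤ f i s) ∧ univ.image σ = S := by
  choose σ hσS hσ using fun i ↦ exists_min_image S (f i) hne
  refine ⟨σ, hσ, Subset.antisymm (image_subset_iff.2 fun i _ ↦ hσS i) fun s hs ↦ ?_⟩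
  obtain ⟨i, hi⟩ := hS s
  exact mem_image.2 ⟨i, mem_univ i, hf i ((hσ i s hs).antisymm (hi _ (hσS i)))⟩

theorem Dominating.isPivot_or_isPivot [Fintype I] [DecidableEq U]
    (hf : ∀ i, Function.Injective (f i)) (hcard : #τ + 1 = Fintype.card I) {i j : I} (hij : i ≠ j)
    {p : U} (hp : p ∈ τ) (hi : ∀ s ∈ τ, f i p ≤ f i s) (hj : ∀ s ∈ τ, f j p ≤ f j s) {x : U}
    (hx : x ∉ τ) (hS : Dominating f (insert x τ)) : IsPivot f τ i x ∨ IsPivot f τ j x := by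
  obtain ⟨σ, hσ, himage⟩ := hS.exists_argmin hf (insert_nonempty x τ)
  have hinj : Function.Injective σ := by
    rw [← Set.injOn_univ, ← coe_univ, ← card_image_iff, himage, card_insert_of_notMem hx, hcard,
      card_univ]
  have hmem : ∀ l, σ l ∈ insert x τ := fun l ↦ himage ▸ mem_image_of_mem σ (mem_univ l)
  obtain ⟨k, -, rfl⟩ := mem_image.1 (himage ▸ mem_insert_self x τ)
  have hmemτ : ∀ l ≠ k, σ l ∈ τ := fun l hl ↦ (mem_insert.1 (hmem l)).resolve_left (hinj.ne hl)
  have hpivot : IsPivot f τ k (σ k) := by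
    refine ⟨fun l hl ↦ ⟨σ l, hmemτ l hl, ?_⟩, fun u hu ↦ ?_⟩
    · exact (hσ l _ (mem_insert_self _ _)).lt_of_ne ((hf l).ne (hinj.ne hl))
    · obtain ⟨l, hl⟩ := hS u
      obtain rfl := eq_of_mem_beyond hu fun s hs ↦ hl s (mem_insert_of_mem hs)
      exact hl _ (mem_insert_self _ _)
  have hmin : ∀ l ≠ k, (∀ s ∈ τ, f l p ≤ f l s) → σ l = p := fun l hl h ↦
    hf l ((hσ l p (mem_insert_of_mem hp)).antisymm (h _ (hmemτ l hl)))
  by_cases hik : i = k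
  · exact .inl (hik ▸ hpivot)
  by_cases hjk : j = k
  · exact .inr (hjk ▸ hpivot)
  exact absurd (hinj ((hmin i hik hi).trans (hmin j hjk hj).symm)) hij

theorem Dominating.exists_insert_iff_isPivot [Fintype I] [DecidableEq U]
    (hf : ∀ i, Function.Injective (f i)) (hτ : Dominating f τ) (hne : τ.Nonempty)
    (hcard : #τ + 1 = Fintype.card I) :
    ∃ i j, i ≠ j ∧
      ∀ x, x ∉ τ ∧ Dominating f (insert x τ) ↔ IsPivot f τ i x ∨ IsPivot f τ j x := by
  obtain ⟨σ, hσ, himage⟩ := hτ.exists_argmin hf hne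
  have hmem : ∀ l, σ l ∈ τ := fun l ↦ himage ▸ mem_image_of_mem σ (mem_univ l)
  obtain ⟨i, -, j, -, hij, hσij⟩ := exists_ne_map_eq_of_card_lt_of_maps_to
    (s := univ) (t := τ) (f := σ) (by rw [card_univ]; lia) fun l _ ↦ hmem l
  -- Every element of `τ` is a minimum in some order other than `i`, and in some other than `j`.
  have hnotMem : ∀ {k k' x}, k' ≠ k → σ k = σ k' → IsPivot f τ k x → x ∉ τ := by
    intro k k' x hk hσk hx hxτ
    have hk' := eq_of_mem_beyond hx.1 (i := k')
    obtain ⟨l, -, rfl⟩ := mem_image.1 (himage ▸ hxτ)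
    obtain rfl := eq_of_mem_beyond hx.1 (hσ l)
    exact hk (hk' (hσk ▸ hσ k'))
  refine ⟨i, j, hij, fun x ↦ ⟨fun ⟨hx, hS⟩ ↦ ?_, ?_⟩⟩
  · exact isPivot_or_isPivot hf hcard hij (hmem i) (hσ i) (hσij ▸ hσ j) hx hS
  · rintro (hx | hx)
    · exact ⟨hnotMem hij.symm hσij hx, hτ.insert_isPivot hx⟩
    · exact ⟨hnotMem hij hσij.symm hx, hτ.insert_isPivot hx⟩

theorem Dominating.exists_insert_iff_eq_or_eq [Fintype I] [Finite U] [DecidableEq U]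
    (hf : ∀ i, Function.Injective (f i)) (hτ : Dominating f τ) (hne : τ.Nonempty)
    (hcard : #τ + 1 = Fintype.card I) (hbeyond : ∀ k, (beyond f τ k).Nonempty) :
    ∃ x y, x ≠ y ∧ ∀ z, z ∉ τ ∧ Dominating f (insert z τ) ↔ z = x ∨ z = y := by
  obtain ⟨i, j, hij, hiff⟩ := hτ.exists_insert_iff_isPivot hf hne hcard
  obtain ⟨x, hx⟩ := exists_isPivot (hbeyond i)
  obtain ⟨y, hy⟩ := exists_isPivot (hbeyond j)
  refine ⟨x, y, (hτ.disjoint_beyond hij).ne_of_mem hx.1 hy.1, fun z ↦ (hiff z).trans ?_⟩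
  exact or_congr ⟨fun hz ↦ hz.unique (hf i) hx, fun h ↦ h ▸ hx⟩
    ⟨fun hz ↦ hz.unique (hf j) hy, fun h ↦ h ▸ hy⟩

open scoped Classical in
/-- The rooms of Scarf's argument: the dominating sets with one element per order. -/
noncomputable def rooms [Fintype I] [Fintype U] (f : I → U → α) : Finset (Finset U) :=
  {S | Dominating f S ∧ #S = Fintype.card I}

theorem mem_rooms [Fintype I] [Fintype U] :
    S ∈ rooms f ↔ Dominating f S ∧ #S = Fintype.card I := by
  simp [rooms]

theorem notMem_and_insert_mem_rooms_iff [Fintype I] [Fintype U] [DecidableEq U] {x : U} :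
    x ∉ τ ∧ insert x τ ∈ rooms f ↔
      #τ + 1 = Fintype.card I ∧ x ∉ τ ∧ Dominating f (insert x τ) := by
  grind [mem_rooms]

theorem even_card_insert_mem_rooms [Fintype I] [Fintype U] [DecidableEq U]
    (hf : ∀ i, Function.Injective (f i)) (hne : τ.Nonempty)
    (hbeyond : ∀ k, (beyond f τ k).Nonempty) : Even #{x | x ∉ τ ∧ insert x τ ∈ rooms f} := by
  obtain hempty | ⟨z, hz⟩ := ({x | x ∉ τ ∧ insert x τ ∈ rooms f} : Finset U).eq_empty_or_nonempty
  · simp [hempty]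
  obtain ⟨hcard, -, hz⟩ := notMem_and_insert_mem_rooms_iff.1 (mem_filter.1 hz).2
  obtain ⟨x, y, hxy, hiff⟩ := (hz.mono (subset_insert z τ)).exists_insert_iff_eq_or_eq
    hf hne hcard hbeyond
  have hpair : ({x | x ∉ τ ∧ insert x τ ∈ rooms f} : Finset U) = {x, y} := by
    ext w
    simp [notMem_and_insert_mem_rooms_iff, hcard, hiff]
  rw [hpair, card_pair hxy]
  exact even_two

end Dominating

section Coloring

variable {I U : Type*} [Fintype I] [DecidableEq I] [DecidableEq U] {c : U → I} {i₀ : I}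

theorem even_card_filter_image_erase {S : Finset U} (hcard : #S = Fintype.card I)
    (hS : S.image c ≠ univ) : Even #{x ∈ S | (S.erase x).image c = univ.erase i₀} := by
  obtain hempty | ⟨x, hx⟩ := {x ∈ S | (S.erase x).image c = univ.erase i₀}.eq_empty_or_nonempty
  · simp [hempty]
  obtain ⟨hxS, hximage⟩ := mem_filter.1 hx
  have hinj : ∀ z ∈ S, (S.erase z).image c = univ.erase i₀ → Set.InjOn c (S.erase z) :=
    fun z hz himage ↦ card_image_iff.1 <| by
      rw [himage, card_erase_of_mem hz, card_erase_of_mem (mem_univ _), hcard, card_univ]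
  have hcx : c x ≠ i₀ := by
    intro h
    rw [← insert_erase hxS, image_insert, hximage, h, insert_erase (mem_univ _)] at hS
    exact hS rfl
  obtain ⟨y, hy, hyx⟩ : ∃ y ∈ S.erase x, c y = c x := by
    rw [← mem_image, hximage]
    exact mem_erase.2 ⟨hcx, mem_univ _⟩
  obtain ⟨hne, hyS⟩ := mem_erase.1 hy
  suffices {x ∈ S | (S.erase x).image c = univ.erase i₀} = {x, y} by
    rw [this, card_pair hne.symm]; exact even_two
  ext z
  simp only [mem_filter, mem_insert, mem_singleton]
  refine ⟨fun ⟨hz, hzimage⟩ ↦ ?_, ?_⟩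
  · by_contra! h
    exact hne (hinj z hz hzimage (mem_erase.2 ⟨h.2.symm, hyS⟩) (mem_erase.2 ⟨h.1.symm, hxS⟩) hyx)
  · rintro (rfl | rfl)
    · exact ⟨hxS, hximage⟩
    · refine ⟨hyS, ?_⟩
      rw [← hximage, ← insert_erase (mem_erase.2 ⟨hne.symm, hxS⟩), erase_right_comm, image_insert,
        ← hyx, ← image_insert, insert_erase hy]

theorem even_sum_card_insert_mem [Fintype U] {𝒜 : Finset (Finset U)}
    (hcard : ∀ S ∈ 𝒜, #S = Fintype.card I) (h𝒜 : ∀ S ∈ 𝒜, S.image c ≠ univ)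
    (i₀ : I) : Even (∑ τ with τ.image c = univ.erase i₀,
      #{x | x ∉ τ ∧ insert x τ ∈ 𝒜}) := by
  have hcount : ∑ τ with τ.image c = univ.erase i₀, #{x | x ∉ τ ∧ insert x τ ∈ 𝒜} =
      ∑ S ∈ 𝒜, #{x ∈ S | (S.erase x).image c = univ.erase i₀} := by
    rw [← card_sigma, ← card_sigma]
    refine card_nbij' (fun p ↦ ⟨insert p.2 p.1, p.2⟩) (fun p ↦ ⟨p.1.erase p.2, p.2⟩) ?_ ?_ ?_ ?_
      <;> simp +contextual [Set.MapsTo, Set.LeftInvOn, insert_erase]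
  rw [hcount]
  exact even_sum _ fun S hS ↦ even_card_filter_image_erase (hcard S hS) (h𝒜 S hS)

end Coloring

section Slack

variable {I T α : Type*} [LinearOrder α]

theorem exists_inr_mem_of_image_eq [Fintype I] [DecidableEq I] {c : T → I} {i₀ : I}
    {τ : Finset (I ⊕ T)} (himage : τ.image (Sum.elim id c) = univ.erase i₀)
    (hne : τ ≠ (univ.erase i₀).map .inl) : ∃ t, .inr t ∈ τ := by
  by_contra! h
  refine hne ?_
  ext (i | t)
  · simpa [h] using Finset.ext_iff.1 himage i
  · simp [h]

/-- Injective ranks on `I ⊕ T`, where the added "slack" element `inl i` is the least one for the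
order `i` and exceeds all of `T` for every other order. Slack elements encode the boundary of the
complex of dominating sets. -/
structure IsSlackFamily (f : I → I ⊕ T → α) : Prop where
  injective (i : I) : Function.Injective (f i)
  inl_lt {i : I} {u : I ⊕ T} (hu : u ≠ .inl i) : f i (.inl i) < f i u
  inr_lt_inl {i j : I} (hij : i ≠ j) (t : T) : f i (.inr t) < f i (.inl j)

namespace IsSlackFamily

variable {f : I → I ⊕ T → α} (hf : IsSlackFamily f)

include hf

theorem inl_notMem {S : Finset (I ⊕ T)} {i : I} {t : T} (h : ∀ s ∈ S, f i (.inr t) ≤ f i s) :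
    .inl i ∉ S :=
  fun hi ↦ (h _ hi).not_gt (hf.inl_lt Sum.inr_ne_inl)

theorem inl_mem_beyond {τ : Finset (I ⊕ T)} {t : T} (ht : .inr t ∈ τ) (k : I) :
    .inl k ∈ beyond f τ k :=
  fun _ hi ↦ ⟨_, ht, hf.inr_lt_inl hi t⟩

variable [Fintype I] [DecidableEq I] [Finite T] [Nonempty T]

theorem existsUnique_dominating_insert [DecidableEq T] (i₀ : I) :
    ∃! x, x ∉ (univ.erase i₀).map .inl ∧ Dominating f (insert x ((univ.erase i₀).map .inl)) := by
  obtain ⟨t₀, ht₀⟩ := Finite.exists_max fun t : T ↦ f i₀ (.inr t)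
  have hle : ∀ {x}, Dominating f (insert x ((univ.erase i₀).map .inl)) →
      ∀ t, f i₀ (.inr t) ≤ f i₀ x := by
    intro x hx t
    obtain ⟨i, hi⟩ := hx (.inr t)
    obtain rfl : i = i₀ := by
      by_contra h
      exact hf.inl_notMem hi (by simp [h])
    exact hi x (mem_insert_self _ _)
  refine ⟨.inr t₀, ⟨by simp, ?_⟩, ?_⟩
  · rintro (k | t)
    · refine ⟨k, fun s _ ↦ ?_⟩
      exact (eq_or_ne s (.inl k)).elim (fun h ↦ h ▸ le_rfl) fun h ↦ (hf.inl_lt h).le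
    · refine ⟨i₀, forall_mem_insert _ _ _ |>.2 ⟨ht₀ t, forall_mem_map.2 fun j hj ↦ ?_⟩⟩
      exact (hf.inr_lt_inl (ne_of_mem_erase hj).symm t).le
  · rintro (k | t) ⟨hk, hx⟩
    · obtain rfl : k = i₀ := by simpa using hk
      exact absurd (hle hx t₀) (hf.inl_lt Sum.inr_ne_inl).not_ge
    · exact hf.injective i₀ ((ht₀ t).antisymm (hle hx t₀))

theorem card_insert_mem_rooms [Fintype T] [DecidableEq T] (i₀ : I) :
    #{x | x ∉ (univ.erase i₀).map .inl ∧ insert x ((univ.erase i₀).map .inl) ∈ rooms f} = 1 := by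
  have hcard : #((univ.erase i₀).map (.inl : I ↪ I ⊕ T)) + 1 = Fintype.card I := by
    rw [card_map, card_erase_add_one (mem_univ _), card_univ]
  obtain ⟨x, hx, hunique⟩ := hf.existsUnique_dominating_insert i₀
  refine card_eq_one.2 ⟨x, eq_singleton_iff_unique_mem.2 ⟨?_, fun z hz ↦ hunique z ?_⟩⟩
  · exact mem_filter.2 ⟨mem_univ x, notMem_and_insert_mem_rooms_iff.2 ⟨hcard, hx⟩⟩
  · exact (notMem_and_insert_mem_rooms_iff.1 (mem_filter.1 hz).2).2

theorem exists_dominating_image_eq_univ (c : T → I) :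
    ∃ S, Dominating f S ∧ S.image (Sum.elim id c) = univ := by
  classical
  have := Fintype.ofFinite T
  obtain ⟨i₀⟩ : Nonempty I := Nonempty.map c ‹_›
  -- Count pairs of a room and an element whose removal leaves exactly the colors other than `i₀`:
  -- without a fully colored room the total is even, yet only the all-slack remainder contributes
  -- an odd number, namely one.
  by_contra! hcon
  have heven := even_sum_card_insert_mem (fun S hS ↦ (mem_rooms.1 hS).2)
    (fun S hS ↦ hcon S (mem_rooms.1 hS).1) i₀
  have hmem : (univ.erase i₀).map .inl ∈
      ({τ | τ.image (Sum.elim id c) = univ.erase i₀} : Finset (Finset (I ⊕ T))) := by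
    simp [map_eq_image, image_image, Function.comp_def, image_id']
  rw [← add_sum_erase _ _ hmem, hf.card_insert_mem_rooms i₀, Nat.even_add] at heven
  refine Nat.not_even_one (heven.2 (even_sum _ fun τ hτ ↦ ?_))
  obtain ⟨hne, hτ⟩ := mem_erase.1 hτ
  obtain ⟨t, ht⟩ := exists_inr_mem_of_image_eq (mem_filter.1 hτ).2 hne
  exact even_card_insert_mem_rooms hf.injective ⟨_, ht⟩ fun k ↦ ⟨_, hf.inl_mem_beyond ht k⟩

end IsSlackFamily

/-- Extends a family of ranks by slack elements, breaking ties by means of an order on `T`. -/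
def slackExtension [LinearOrder I] [LinearOrder T] (f : I → T → α) (i : I) :
    I ⊕ T → WithBot ((α ×ₗ T) ⊕ₗ I)
  | .inl j => if j = i then ⊥ else ↑(Sum.inrₗ j : (α ×ₗ T) ⊕ₗ I)
  | .inr t => ↑(Sum.inlₗ (toLex (f i t, t)) : (α ×ₗ T) ⊕ₗ I)

theorem isSlackFamily_slackExtension [LinearOrder I] [LinearOrder T] (f : I → T → α) :
    IsSlackFamily (slackExtension f) where
  injective i := by
    rintro (j | t) (k | s) h <;> simp only [slackExtension] at h <;> (try split_ifs at h) <;>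
      simp_all
  inl_lt {i u} hu := by
    cases u <;> simp_all [slackExtension]
  inr_lt_inl {i j} hij t := by
    simp [slackExtension, hij.symm]

theorem slackExtension_inr_le_inr [LinearOrder I] [LinearOrder T] {f : I → T → α} {i : I} {s t : T}
    (h : slackExtension f i (.inr s) ≤ slackExtension f i (.inr t)) : f i s ≤ f i t :=
  Prod.Lex.monotone_fst _ _ (by simpa [slackExtension] using h)

theorem exists_finset_dominating_of_coloring [Finite I] [Finite T] [Nonempty T] (f : I → T → α)
    (c : T → I) : ∃ S : Finset T, ∀ t, ∃ s₀ ∈ S, ∀ s ∈ S, f (c s₀) t ≤ f (c s₀) s := by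
  classical
  have := Fintype.ofFinite I
  have := Fintype.ofFinite T
  let : LinearOrder I := linearOrderOfSTO WellOrderingRel
  let : LinearOrder T := linearOrderOfSTO WellOrderingRel
  have hslack := isSlackFamily_slackExtension f
  obtain ⟨S, hS, himage⟩ := hslack.exists_dominating_image_eq_univ c
  refine ⟨S.toRight, fun t ↦ ?_⟩
  obtain ⟨i, hi⟩ := hS (.inr t)
  obtain ⟨j | s₀, hs₀, rfl⟩ := mem_image.1 (himage ▸ mem_univ i)
  · exact absurd hs₀ (hslack.inl_notMem hi)
  · exact ⟨s₀, mem_toRight.2 hs₀, fun s hs ↦ slackExtension_inr_le_inr (hi _ (mem_toRight.1 hs))⟩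

theorem exists_finset_exists_lowerBound [Finite I] [Zero α] {P : Set (I → α)} [Finite P]
    [Nonempty P] (hP : ∀ t ∈ P, 0 ≤ t) (c : P → I) :
    ∃ S : Finset P, S.Nonempty ∧ ∃ p : I → α, 0 ≤ p ∧ (∀ s ∈ S, p ≤ s) ∧
      (∀ i, (∀ s ∈ S, c s ≠ i) → p i = 0) ∧ ∀ t ∈ P, ∃ s ∈ S, t (c s) ≤ p (c s) := by
  classical
  obtain ⟨S, hS⟩ := exists_finset_dominating_of_coloring (fun i (t : P) ↦ t.1 i) c
  have hne : S.Nonempty := (hS (Classical.arbitrary P)).imp fun _ h ↦ h.1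
  let p : I → α := fun i ↦ if ∃ s ∈ S, c s = i then S.inf' hne (fun s ↦ s.1 i) else 0
  refine ⟨S, hne, p, fun i ↦ ?_, fun s hs i ↦ ?_, fun i hi ↦ if_neg (by simpa using hi),
    fun t ht ↦ ?_⟩
  · dsimp only [p]
    split_ifs
    exacts [le_inf' _ _ fun s _ ↦ hP s s.2 i, le_rfl]
  · dsimp only [p]
    split_ifs
    exacts [inf'_le _ hs, hP s s.2 i]
  · obtain ⟨s₀, hs₀, hle⟩ := hS ⟨t, ht⟩
    exact ⟨s₀, hs₀, (le_inf' _ _ hle).trans_eq (if_pos ⟨s₀, hs₀, rfl⟩).symm⟩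

end Slack

end Scarf

section KKM

open Filter Topology

variable {ι : Type*} [Fintype ι]

theorem apply_le_add_one_sub_sum_of_mem_stdSimplex {p y : ι → ℝ} (hy : y ∈ stdSimplex ℝ ι)
    (hpy : p ≤ y) (i : ι) : y i ≤ p i + (1 - ∑ j, p j) := by
  have := single_le_sum (fun j _ ↦ sub_nonneg.2 (hpy j)) (mem_univ i)
  rw [sum_sub_distrib, hy.2] at this
  linarith

theorem dist_le_one_sub_sum_of_mem_stdSimplex {p y z : ι → ℝ} (hy : y ∈ stdSimplex ℝ ι)
    (hz : z ∈ stdSimplex ℝ ι) (hpy : p ≤ y) (hpz : p ≤ z) : dist y z ≤ 1 - ∑ i, p i := by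
  have hp : ∑ i, p i ≤ 1 := hy.2 ▸ sum_le_sum fun i _ ↦ hpy i
  refine (dist_pi_le_iff (sub_nonneg.2 hp)).2 fun i ↦ abs_sub_le_iff.2 ⟨?_, ?_⟩
  · linarith [apply_le_add_one_sub_sum_of_mem_stdSimplex hy hpy i, hpz i]
  · linarith [apply_le_add_one_sub_sum_of_mem_stdSimplex hz hpz i, hpy i]

theorem one_sub_sum_le_card_mul {T : Set (ι → ℝ)} {δ : ℝ}
    (hT : stdSimplex ℝ ι ⊆ ⋃ t ∈ T, Metric.ball t δ) {C : Finset ι} (hC : C.Nonempty) {p : ι → ℝ}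
    (hp : 0 ≤ p) (hp1 : ∑ i, p i ≤ 1) (hTp : ∀ t ∈ T, ∃ i ∈ C, t i ≤ p i) :
    1 - ∑ i, p i ≤ #C * δ := by
  classical
  have hcard : (0 : ℝ) < #C := by exact_mod_cast hC.card_pos
  set d := (1 - ∑ i, p i) / #C with hd
  have hmem : (fun i ↦ p i + if i ∈ C then d else 0) ∈ stdSimplex ℝ ι := by
    refine ⟨fun i ↦ add_nonneg (hp i) ?_, ?_⟩
    · have : 0 ≤ d := div_nonneg (sub_nonneg.2 hp1) hcard.le
      split_ifs <;> simp [this]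
    · rw [sum_add_distrib, sum_ite_mem, univ_inter, sum_const, nsmul_eq_mul, hd,
        mul_div_cancel₀ _ hcard.ne', add_sub_cancel]
  obtain ⟨t, ht, hdist⟩ := Set.mem_iUnion₂.1 (hT hmem)
  obtain ⟨i, hi, hti⟩ := hTp t ht
  have hclose := (le_abs_self _).trans_lt ((dist_le_pi_dist _ t i).trans_lt hdist)
  rw [if_pos hi] at hclose
  rw [← div_le_iff₀' hcard]
  linarith

theorem exists_mem_stdSimplex_forall_le_or_dist_le [Nonempty ι] {F : ι → Set (ι → ℝ)}
    (hF : stdSimplex ℝ ι ⊆ ⋃ i, F i) {ε : ℝ} (hε : 0 < ε) :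
    ∃ x ∈ stdSimplex ℝ ι, ∀ i, x i ≤ ε ∨ ∃ z ∈ F i, dist z x ≤ ε := by
  classical
  have hcard : (0 : ℝ) < Fintype.card ι := by exact_mod_cast Fintype.card_pos
  obtain ⟨T, hTsub, hTfin, hT⟩ :=
    (isCompact_stdSimplex ℝ ι).finite_cover_balls (div_pos hε hcard)
  obtain ⟨t₀, ht₀, -⟩ := Set.mem_iUnion₂.1 (hT (single_mem_stdSimplex ℝ (Classical.arbitrary ι)))
  have : Finite T := hTfin
  have : Nonempty T := ⟨⟨t₀, ht₀⟩⟩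
  choose c hc using fun t : T ↦ Set.mem_iUnion.1 (hF (hTsub t.2))
  obtain ⟨S, ⟨x, hx⟩, p, hp, hpS, hp0, hTp⟩ :=
    Scarf.exists_finset_exists_lowerBound (fun t ht ↦ (hTsub ht).1) c
  have hp1 : ∑ i, p i ≤ 1 := (hTsub x.2).2 ▸ sum_le_sum fun i _ ↦ hpS x hx i
  have hsmall : 1 - ∑ i, p i ≤ ε := calc
    1 - ∑ i, p i ≤ #(S.image c) * (ε / Fintype.card ι) :=
      one_sub_sum_le_card_mul hT ⟨c x, mem_image_of_mem c hx⟩ hp hp1 fun t ht ↦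
        (hTp t ht).elim fun s hs ↦ ⟨c s, mem_image_of_mem c hs.1, hs.2⟩
    _ ≤ Fintype.card ι * (ε / Fintype.card ι) := by gcongr; exact card_le_univ _
    _ = ε := mul_div_cancel₀ _ hcard.ne'
  refine ⟨x, hTsub x.2, fun i ↦ ?_⟩
  by_cases! hi : ∃ s ∈ S, c s = i
  · obtain ⟨s, hs, rfl⟩ := hi
    exact .inr ⟨s, hc s, (dist_le_one_sub_sum_of_mem_stdSimplex (hTsub s.2) (hTsub x.2) (hpS s hs)
      (hpS x hx)).trans hsmall⟩
  · have := apply_le_add_one_sub_sum_of_mem_stdSimplex (hTsub x.2) (hpS x hx) i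
    rw [hp0 i hi, zero_add] at this
    exact .inl (this.trans hsmall)

theorem exists_mem_stdSimplex_forall_mem_of_isClosed [Nonempty ι] {F : ι → Set (ι → ℝ)}
    (hclosed : ∀ i, IsClosed (F i)) (hcover : stdSimplex ℝ ι ⊆ ⋃ i, F i)
    (hface : ∀ i, ∀ x ∈ stdSimplex ℝ ι, x i = 0 → x ∈ F i) :
    ∃ x ∈ stdSimplex ℝ ι, ∀ i, x ∈ F i := by
  choose x hx hnear using fun N : ℕ ↦
    exists_mem_stdSimplex_forall_le_or_dist_le hcover (Nat.one_div_pos_of_nat (α := ℝ) (n := N))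
  obtain ⟨y, hy, φ, hφ, hlim⟩ := (isCompact_stdSimplex ℝ ι).tendsto_subseq hx
  have hε : Tendsto (fun N ↦ 1 / ((φ N : ℝ) + 1)) atTop (𝓝 0) :=
    tendsto_one_div_add_atTop_nhds_zero_nat.comp hφ.tendsto_atTop
  refine ⟨y, hy, fun i ↦ ?_⟩
  obtain hyi | hyi := (hy.1 i).eq_or_lt'
  · exact hface i y hy hyi
  refine (hclosed i).closure_subset (Metric.mem_closure_iff.2 fun η hη ↦ ?_)
  obtain ⟨N, hdist, hlarge, hεη⟩ := ((Metric.tendsto_nhds.1 hlim (η / 2) (half_pos hη)).and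
    ((hε.eventually_lt (tendsto_pi_nhds.1 hlim i) hyi).and
      (hε.eventually_lt_const (half_pos hη)))).exists
  obtain ⟨z, hz, hzx⟩ := (hnear (φ N) i).resolve_left hlarge.not_ge
  refine ⟨z, hz, ?_⟩
  calc dist y z ≤ dist (x (φ N)) y + dist z (x (φ N)) := by
        rw [dist_comm (x _), dist_comm z]; exact dist_triangle _ _ _
    _ < η / 2 + η / 2 := add_lt_add_of_lt_of_le hdist (hzx.trans hεη.le)
    _ = η := add_halves η

theorem exists_mem_stdSimplex_isFixedPt [Nonempty ι] {g : (ι → ℝ) → ι → ℝ}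
    (hg : ContinuousOn g (stdSimplex ℝ ι))
    (hmaps : Set.MapsTo g (stdSimplex ℝ ι) (stdSimplex ℝ ι)) :
    ∃ x ∈ stdSimplex ℝ ι, Function.IsFixedPt g x := by
  have hΔ : IsClosed (stdSimplex ℝ ι) := isClosed_stdSimplex ℝ ι
  -- Since `x` and `g x` have equal sums, `x ≤ g x` forces equality.
  obtain ⟨x, hx, hle⟩ := exists_mem_stdSimplex_forall_mem_of_isClosed
    (F := fun i ↦ {x ∈ stdSimplex ℝ ι | x i ≤ g x i})
    (fun i ↦ hΔ.isClosed_le (continuous_apply i).continuousOn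
      ((continuous_apply i).comp_continuousOn hg))
    (fun x hx ↦ by
      obtain ⟨i, -, hi⟩ := exists_le_of_sum_le univ_nonempty ((hx.2.trans (hmaps hx).2.symm).le)
      exact Set.mem_iUnion.2 ⟨i, hx, hi⟩)
    (fun i x hx hxi ↦ ⟨hx, hxi ▸ (hmaps hx).1 i⟩)
  refine ⟨x, hx, funext fun i ↦ ?_⟩
  exact ((sum_eq_sum_iff_of_le fun i _ ↦ (hle i).2).1 (hx.2.trans (hmaps hx).2.symm) i
    (mem_univ i)).symm

end KKM

section Gmap

variable {n : ℕ} {α : ℝ} {v : Fin n → ℝ} {R : Matrix (Fin n) (Fin n × Fin n) ℝ}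

theorem continuous_Gmap : Continuous (Gmap n α v R) := by
  unfold Gmap
  fun_prop

theorem Gmap_nonneg (hα : α ∈ Set.Icc 0 1) (hv : 0 ≤ v) (hR : ∀ i j, 0 ≤ R i j) {x : Fin n → ℝ}
    (hx : 0 ≤ x) : 0 ≤ Gmap n α v R x :=
  add_nonneg (smul_nonneg hα.1 fun i ↦ sum_nonneg fun _ _ ↦
    mul_nonneg (hR i _) (mul_nonneg (hx _) (hx _))) (smul_nonneg (sub_nonneg.2 hα.2) hv)

theorem sum_Gmap (hv : ∑ i, v i = 1) (hR : ∀ j, ∑ i, R i j = 1) (x : Fin n → ℝ) :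
    ∑ i, Gmap n α v R x i = α * (∑ i, x i) ^ 2 + (1 - α) := by
  have hmulVec : ∑ i, R.mulVec (fun p ↦ x p.1 * x p.2) i = (∑ i, x i) ^ 2 := calc
    _ = ∑ p : Fin n × Fin n, (∑ i, R i p) * (x p.1 * x p.2) := by
      simp only [Matrix.mulVec, dotProduct, sum_mul]
      exact sum_comm
    _ = (∑ i, x i) ^ 2 := by
      simp only [hR, one_mul, sq, sum_mul_sum, Fintype.sum_prod_type]
  simp only [Gmap, Pi.add_apply, Pi.smul_apply, smul_eq_mul, sum_add_distrib, ← mul_sum, hmulVec,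
    hv, mul_one]

theorem sum_eq_one_or_eq_div_of_Gmap_eq_self (hα : α ≠ 0) (hv : ∑ i, v i = 1)
    (hR : ∀ j, ∑ i, R i j = 1) {x : Fin n → ℝ} (hx : Gmap n α v R x = x) :
    ∑ i, x i = 1 ∨ ∑ i, x i = (1 - α) / α := by
  have hsum := sum_Gmap (α := α) hv hR x
  rw [hx] at hsum
  have hfactor : (∑ i, x i - 1) * (α * ∑ i, x i - (1 - α)) = 0 := by linear_combination -hsum
  rw [eq_div_iff hα, mul_comm _ α, ← sub_eq_zero, ← sub_eq_zero (a := α * _)]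
  exact mul_eq_zero.1 hfactor

theorem exists_Gmap_eq_self_sum_eq (hα : 0 ≤ α) (hα1 : α < 1) (hv : 0 ≤ v)
    (hv1 : ∑ i, v i = 1) (hR : ∀ i j, 0 ≤ R i j) (hR1 : ∀ j, ∑ i, R i j = 1) {b : ℝ}
    (hb : α * b ^ 2 + (1 - α) = b) :
    ∃ x, 0 ≤ x ∧ Gmap n α v R x = x ∧ ∑ i, x i = b := by
  have hb0 : 0 < b := by linarith [mul_nonneg hα (sq_nonneg b)]
  have : Nonempty (Fin n) := by
    by_contra! h
    simp at hv1
  obtain ⟨x, hx, hfix⟩ := exists_mem_stdSimplex_isFixedPt (g := fun x ↦ b⁻¹ • Gmap n α v R (b • x))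
    ((continuous_Gmap.comp (continuous_const_smul b)).const_smul b⁻¹).continuousOn fun x hx ↦ by
      refine ⟨smul_nonneg (inv_nonneg.2 hb0.le) (Gmap_nonneg ⟨hα, hα1.le⟩ hv hR
        (smul_nonneg hb0.le hx.1)), ?_⟩
      simp only [Pi.smul_apply, smul_eq_mul, ← mul_sum, sum_Gmap hv1 hR1, hx.2, mul_one, hb,
        inv_mul_cancel₀ hb0.ne']
  refine ⟨b • x, smul_nonneg hb0.le hx.1, (inv_smul_eq_iff₀ hb0.ne').1 hfix, ?_⟩
  simp only [Pi.smul_apply, smul_eq_mul, ← mul_sum, hx.2, mul_one]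

end Gmap

theorem stmt_9 (n : ℕ) (hn : 1 ≤ n) (α : ℝ) (hα : α ∈ Set.Ioo (1/2 : ℝ) 1)
    (v : Fin n → ℝ) (hv : ∀ i, 0 ≤ v i) (hv1 : ∑ i, v i = 1)
    (R : Matrix (Fin n) (Fin n × Fin n) ℝ) (hR : ∀ i j, 0 ≤ R i j)
    (hRs : ∀ j, ∑ i, R i j = 1)
    (m : Fin n → ℝ) (hm0 : ∀ i, 0 ≤ m i) (hmfix : Gmap n α v R m = m)
    (hmin : ∀ z : Fin n → ℝ, (∀ i, 0 ≤ z i) → Gmap n α v R z = z → ∀ i, m i ≤ z i) :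
    ∑ i, m i = (1 - α) / α ∧ (1 - α) / α < 1 ∧
    ∃ s : Fin n → ℝ, (∀ i, m i ≤ s i) ∧ Gmap n α v R s = s ∧ ∑ i, s i = 1 := by
  obtain ⟨hhalf, hα1⟩ := hα
  have hα0 : 0 < α := by linarith
  have hlt : (1 - α) / α < 1 := by rw [div_lt_one hα0]; linarith
  obtain ⟨z, hz0, hz, hzsum⟩ := exists_Gmap_eq_self_sum_eq hα0.le hα1 hv hv1 hR hRs
    (b := (1 - α) / α) (by field_simp; ring)
  obtain ⟨s, hs0, hs, hssum⟩ := exists_Gmap_eq_self_sum_eq hα0.le hα1 hv hv1 hR hRs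
    (b := 1) (by ring)
  have hmz : ∑ i, m i ≤ (1 - α) / α := hzsum ▸ sum_le_sum fun i _ ↦ hmin z hz0 hz i
  refine ⟨?_, hlt, s, hmin s hs0 hs, hs, hssum⟩
  exact (sum_eq_one_or_eq_div_of_Gmap_eq_self hα0.ne' hv1 hRs hmfix).resolve_left
    (hmz.trans_lt hlt).ne
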